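/- Let a, b, c, d be real numbers with ad − bc = 1 and b ≠ 0, and let f ∈ L¹(ℝ, ℂ). Then for every real x and every s ∈ ℝ, C_A(cos(x·t) f(t))(s) = (e^{-(i/2)·d·b·x²}/2) · ( e^{-i·d·x·s} · C_A f(s + bx) + e^{i·d·x·s} · C_A f(s − bx) ). -/

import Mathlib

open MeasureTheory Filter

noncomputable def sqrtTwoPiIb (b : ℝ) : ℂ := (2 * (Real.pi : ℂ) * Complex.I * (b:ℂ)) ^ ((1:ℂ)/2)

noncomputable def CCT (a b d : ℝ) (f : ℝ → ℂ) (s : ℝ) : ℂ :=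
  (1 / sqrtTwoPiIb b) * Complex.exp ((Complex.I/2) * ((d:ℂ)/(b:ℂ)) * (s:ℂ)^2) *
    ∫ t : ℝ, (Real.cos ((s/b) * t) : ℂ) *
      Complex.exp ((Complex.I/2) * ((a:ℂ)/(b:ℂ)) * (t:ℂ)^2) * f t

/-- The linear chirp `t ↦ e^{(i/2) α t²}` of real rate `α`. The canonical cosine transform
multiplies by one chirp before taking the cosine transform and by another one after it. -/
noncomputable def chirp (α t : ℝ) : ℂ := Complex.exp (Complex.I / 2 * α * t ^ 2)

/-- The cosine transform `ω ↦ ∫ cos (ω t) g(t) dμ(t)` of a vector-valued function on the whole line,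
without normalizing constant. -/
noncomputable def cosTransform {E : Type*} [NormedAddCommGroup E] [NormedSpace ℝ E]
    (μ : Measure ℝ) (g : ℝ → E) (ω : ℝ) : E :=
  ∫ t, Real.cos (ω * t) • g t ∂μ

section Chirp

theorem norm_chirp (α t : ℝ) : ‖chirp α t‖ = 1 := by
  have h_phase : Complex.I / 2 * α * t ^ 2 = ((α * t ^ 2 / 2 : ℝ) : ℂ) * Complex.I := by
    push_cast
    ring
  rw [chirp, h_phase, Complex.norm_exp_ofReal_mul_I]

theorem continuous_chirp (α : ℝ) : Continuous (chirp α) := by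
  unfold chirp
  fun_prop

theorem integrable_chirp_mul {μ : Measure ℝ} {f : ℝ → ℂ} (hf : Integrable f μ) (α : ℝ) :
    Integrable (fun t => chirp α t * f t) μ :=
  hf.bdd_mul (continuous_chirp α).aestronglyMeasurable
    (Eventually.of_forall fun t => (norm_chirp α t).le)

-- The exponential factors come from `(s + b x)² / b = s² / b + 2 x s + b x²`.
theorem exp_mul_exp_mul_chirp_add {b : ℝ} (hb : b ≠ 0) (d x s : ℝ) :
    Complex.exp (-(Complex.I / 2) * d * b * x ^ 2) * Complex.exp (-Complex.I * d * x * s) *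
      chirp (d / b) (s + b * x) = chirp (d / b) s := by
  have hb' : (b : ℂ) ≠ 0 := Complex.ofReal_ne_zero.mpr hb
  rw [chirp, chirp, ← Complex.exp_add, ← Complex.exp_add]
  congr 1
  push_cast
  field_simp
  ring

theorem exp_mul_exp_mul_chirp_sub {b : ℝ} (hb : b ≠ 0) (d x s : ℝ) :
    Complex.exp (-(Complex.I / 2) * d * b * x ^ 2) * Complex.exp (Complex.I * d * x * s) *
      chirp (d / b) (s - b * x) = chirp (d / b) s := by
  simpa [← sub_eq_add_neg] using exp_mul_exp_mul_chirp_add hb d (-x) s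

end Chirp

section CosTransform

variable {E : Type*} [NormedAddCommGroup E] [NormedSpace ℝ E] {μ : Measure ℝ} {g : ℝ → E}

theorem integrable_cos_smul (hg : Integrable g μ) (ω : ℝ) :
    Integrable (fun t => Real.cos (ω * t) • g t) μ :=
  hg.bdd_smul 1 (Continuous.aestronglyMeasurable (by fun_prop))
    (Eventually.of_forall fun t => Real.abs_cos_le_one (ω * t))

theorem cosTransform_cos_smul (hg : Integrable g μ) (x ω : ℝ) :
    cosTransform μ (fun t => Real.cos (x * t) • g t) ω =
      (1 / 2 : ℝ) • (cosTransform μ g (ω + x) + cosTransform μ g (ω - x)) := by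
  have product_to_sum (t : ℝ) : Real.cos (ω * t) * Real.cos (x * t) =
      1 / 2 * (Real.cos ((ω + x) * t) + Real.cos ((ω - x) * t)) := by
    rw [add_mul, sub_mul, Real.cos_add, Real.cos_sub]
    ring
  simp only [cosTransform]
  rw [← integral_add (integrable_cos_smul hg _) (integrable_cos_smul hg _), ← integral_smul]
  simp only [← add_smul, smul_smul, product_to_sum]

end CosTransform

theorem CCT_eq_chirp_mul_cosTransform (a b d : ℝ) (f : ℝ → ℂ) (s : ℝ) :
    CCT a b d f s = 1 / sqrtTwoPiIb b * chirp (d / b) s *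
      cosTransform volume (fun t => chirp (a / b) t * f t) (s / b) := by
  simp only [CCT, chirp, cosTransform, Complex.real_smul, Complex.ofReal_div, mul_assoc]

theorem cct_cos_mul (a b c d : ℝ) (hb : b ≠ 0) (hA : a * d - b * c = 1)
    (f : ℝ → ℂ) (hf : Integrable f) :
    ∀ x s : ℝ, CCT a b d (fun t => (Real.cos (x * t) : ℂ) * f t) s =
      (Complex.exp (-(Complex.I/2) * (d:ℂ) * (b:ℂ) * (x:ℂ)^2) / 2) *
        (Complex.exp (-Complex.I * (d:ℂ) * (x:ℂ) * (s:ℂ)) * CCT a b d f (s + b * x) +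
         Complex.exp (Complex.I * (d:ℂ) * (x:ℂ) * (s:ℂ)) * CCT a b d f (s - b * x)) := by
  intro x s
  set g : ℝ → ℂ := fun t => chirp (a / b) t * f t with hg
  have chirp_cos_mul : (fun t => chirp (a / b) t * ((Real.cos (x * t) : ℂ) * f t)) =
      fun t => Real.cos (x * t) • g t := by
    funext t
    rw [hg, Complex.real_smul, mul_left_comm]
  have add_div_eq : (s + b * x) / b = s / b + x := by field_simp
  have sub_div_eq : (s - b * x) / b = s / b - x := by field_simp
  simp only [CCT_eq_chirp_mul_cosTransform]
  rw [chirp_cos_mul, cosTransform_cos_smul (integrable_chirp_mul hf _), add_div_eq, sub_div_eq,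
    Complex.real_smul]
  push_cast
  linear_combination
    -(1 / sqrtTwoPiIb b / 2 * cosTransform volume g (s / b + x)) *
        exp_mul_exp_mul_chirp_add hb d x s -
      1 / sqrtTwoPiIb b / 2 * cosTransform volume g (s / b - x) *
        exp_mul_exp_mul_chirp_sub hb d x s
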